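/- Let x be a single sample from the symmetric sparse Gaussian mixture model with mean vector μ^S, where S is uniformly distributed over the collection 𝕊̃ of k-element subsets of [p] containing {1,…,k−1}, and let I(x; S) be their mutual information. In the asymptotic setting p → ∞ with k → ∞ and k/p → 0, if λ < 1, then for p and k sufficiently large with k/p sufficiently small, I(x; S) ≤ (1/2)·(λ²/k)·(1+o(1)). -/

import Mathlib

open MeasureTheory ProbabilityTheory Filter
open scoped ENNReal NNReal

noncomputable section

/-- Kullback-Leibler divergence `KL(μ ‖ ν) = ∫ log (dμ/dν) dμ` (real-valued version). -/
def klDivR {α : Type*} [MeasurableSpace α] (μ ν : Measure α) : ℝ :=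
  ∫ x, Real.log ((μ.rnDeriv ν x).toReal) ∂μ

/-- Mutual information `I(x; S)` between a sample `x` with conditional law `κ S` and a
latent variable `S` uniformly distributed on the finite index type: the average KL
divergence between the conditional laws and the (uniform) mixture marginal. -/
def mutualInfoUnif {ι α : Type*} [Fintype ι] [MeasurableSpace α] (κ : ι → Measure α) : ℝ :=
  (Fintype.card ι : ℝ)⁻¹ *
    ∑ s : ι, klDivR (κ s) ((Fintype.card ι : ℝ≥0∞)⁻¹ • ∑ t : ι, κ t)

/-- Product of independent one-dimensional Gaussians `N(m j, 1)`: the law of `N(m, I_p)`. -/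
def gaussPi {p : ℕ} (m : Fin p → ℝ) : Measure (Fin p → ℝ) :=
  Measure.pi fun j => gaussianReal (m j) 1

/-- The law of one unlabeled sample `x`: equal mixture of `N(μ, I_p)` and `N(-μ, I_p)`. -/
def unlabeledLaw {p : ℕ} (m : Fin p → ℝ) : Measure (Fin p → ℝ) :=
  (2 : ℝ≥0∞)⁻¹ • gaussPi m + (2 : ℝ≥0∞)⁻¹ • gaussPi (fun j => -m j)

/-- The `k`-sparse mean vector with support `S` and nonzero entries `√(λ/k)`. -/
def muVec (p k : ℕ) (lam : ℝ) (S : Finset (Fin p)) : Fin p → ℝ :=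
  fun j => if j ∈ S then Real.sqrt (lam / k) else 0

/-- The collection `𝕊̃` of all `k`-element subsets of `Fin p` containing the first `k-1`
indices `{0, …, k-2}`. -/
def stildeF (p k : ℕ) : Finset (Finset (Fin p)) :=
  ((Finset.univ : Finset (Fin p)).powersetCard k).filter
    (fun T => ∀ i : Fin p, (i : ℕ) < k - 1 → i ∈ T)

/-!
Gibbs' inequality bounds the mutual information by the average divergence of the conditional laws
from any reference law. Take as reference the unlabeled law `P_B` whose support `B`, of size
`k - 1`, is common to all the candidate supports. For `B ⊆ T` the log-likelihood ratio of `P_T` and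
`P_B` depends on `x` only through the projections on `μ^T` and `μ^B`, so that
`KL(P_T ‖ P_B) = D (‖μ^T‖) - D (‖μ^B‖)`, where `D s` is the divergence of `½ N(s, 1) + ½ N(-s, 1)`
from `N(0, 1)`. With `Y ~ N(s, 1)`, the Gaussian integration by parts formula and the symmetry
`E tanh (s Y) = E tanh² (s Y)` show that the derivative of `D` at `s` is `s E tanh² (s Y)`, where
`E tanh² (s Y) ≤ E [s Y tanh (s Y)] = s²`. This derivative is thus at most `s³`, and the divergence
at most `(‖μ^T‖⁴ - ‖μ^B‖⁴) / 4 = (λ² - (λ (k - 1) / k)²) / 4 ≤ λ² / (2 k)`.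
-/

section Tanh

lemma hasDerivAt_tanh (x : ℝ) : HasDerivAt Real.tanh (1 - Real.tanh x ^ 2) x := by
  have h := (Real.hasDerivAt_sinh x).div (Real.hasDerivAt_cosh x) (Real.cosh_pos x).ne'
  convert! h using 1
  · ext y
    exact Real.tanh_eq_sinh_div_cosh y
  · have hc := (Real.cosh_pos x).ne'
    rw [Real.tanh_eq_sinh_div_cosh]
    field_simp

@[fun_prop]
lemma continuous_tanh : Continuous Real.tanh :=
  continuous_iff_continuousAt.2 fun x => (hasDerivAt_tanh x).continuousAt

lemma hasDerivAt_log_cosh (x : ℝ) :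
    HasDerivAt (fun x => Real.log (Real.cosh x)) (Real.tanh x) x := by
  rw [Real.tanh_eq_sinh_div_cosh]
  exact (Real.hasDerivAt_cosh x).log (Real.cosh_pos x).ne'

lemma abs_log_cosh_le (x : ℝ) : |Real.log (Real.cosh x)| ≤ |x| := by
  rw [abs_of_nonneg (Real.log_nonneg (Real.one_le_cosh x)),
    Real.log_le_iff_le_exp (Real.cosh_pos x), ← Real.cosh_abs, Real.cosh_eq]
  have : Real.exp (-|x|) ≤ Real.exp |x| := Real.exp_le_exp.2 (by linarith [abs_nonneg x])
  linarith

lemma abs_tanh_le_one (x : ℝ) : |Real.tanh x| ≤ 1 :=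
  abs_le.2 ⟨(Real.neg_one_lt_tanh x).le, (Real.tanh_lt_one x).le⟩

lemma tanh_sq_le_mul_tanh (x : ℝ) : Real.tanh x ^ 2 ≤ x * Real.tanh x := by
  have hmono : Monotone fun x => x - Real.tanh x := by
    refine monotone_of_hasDerivAt_nonneg (fun y => (hasDerivAt_id y).sub (hasDerivAt_tanh y))
      fun y => ?_
    simpa using sq_nonneg (Real.tanh y)
  have htanh : Monotone Real.tanh :=
    monotone_of_hasDerivAt_nonneg hasDerivAt_tanh fun y => by
      simpa using (Real.tanh_sq_lt_one y).le
  suffices 0 ≤ Real.tanh x * (x - Real.tanh x) by linarith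
  rcases le_total 0 x with hx | hx
  · exact mul_nonneg (by simpa using htanh hx) (by simpa using hmono hx)
  · exact mul_nonneg_of_nonpos_of_nonpos (by simpa using htanh hx) (by simpa using hmono hx)

end Tanh

section Gaussian

lemma integral_gaussianReal_eq_integral_const_add (m : ℝ) (v : ℝ≥0) {f : ℝ → ℝ}
    (hf : Measurable f) :
    ∫ x, f x ∂gaussianReal m v = ∫ z, f (m + z) ∂gaussianReal 0 v := by
  have hmap := gaussianReal_map_const_add (μ := 0) (v := v) m
  rw [zero_add] at hmap
  rw [← hmap, integral_map (by fun_prop) hf.aestronglyMeasurable]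

lemma hasDerivAt_gaussianPDFReal (m : ℝ) (v : ℝ≥0) (x : ℝ) :
    HasDerivAt (gaussianPDFReal m v) (-(x - m) / v * gaussianPDFReal m v x) x := by
  have hexp : HasDerivAt (fun x => -(x - m) ^ 2 / (2 * v)) (-(2 * (x - m)) / (2 * v)) x := by
    simpa using ((((hasDerivAt_id x).sub_const m).pow 2).neg.div_const (2 * (v : ℝ)))
  convert! hexp.exp.const_mul (√(2 * Real.pi * v))⁻¹ using 1
  rw [gaussianPDFReal, ← mul_neg, mul_div_mul_left _ _ two_ne_zero]
  ring

lemma integrable_gaussianReal_iff {m : ℝ} {v : ℝ≥0} (hv : v ≠ 0) {f : ℝ → ℝ} :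
    Integrable f (gaussianReal m v) ↔ Integrable fun x => gaussianPDFReal m v x * f x := by
  rw [gaussianReal_of_var_ne_zero _ hv, integrable_withDensity_iff_integrable_smul'
    (measurable_gaussianPDF _ _) (ae_of_all _ fun _ => gaussianPDF_lt_top)]
  simp only [toReal_gaussianPDF, smul_eq_mul]

theorem integral_sub_mul_gaussianReal {m : ℝ} {v : ℝ≥0} {f f' : ℝ → ℝ}
    (hf : ∀ x, HasDerivAt f (f' x) x) (hfint : Integrable f (gaussianReal m v))
    (hxf : Integrable (fun x => (x - m) * f x) (gaussianReal m v))
    (hf' : Integrable f' (gaussianReal m v)) :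
    ∫ x, (x - m) * f x ∂gaussianReal m v = v * ∫ x, f' x ∂gaussianReal m v := by
  rcases eq_or_ne v 0 with rfl | hv
  · simp
  have hv' : (v : ℝ) ≠ 0 := by exact_mod_cast hv
  rw [integrable_gaussianReal_iff hv] at hfint hxf hf'
  have hpdf' : ∀ x, f x * (-(x - m) / v * gaussianPDFReal m v x)
      = -(v : ℝ)⁻¹ * (gaussianPDFReal m v x * ((x - m) * f x)) := fun x => by ring
  have hparts := integral_mul_deriv_eq_deriv_mul_of_integrable (fun x _ => hf x)
    (fun x _ => hasDerivAt_gaussianPDFReal m v x)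
    ((hxf.const_mul _).congr (ae_of_all _ fun x => (hpdf' x).symm))
    (hf'.congr (ae_of_all _ fun x => mul_comm _ _))
    (hfint.congr (ae_of_all _ fun x => mul_comm _ _))
  simp_rw [integral_gaussianReal_eq_integral_smul hv, smul_eq_mul]
  simp_rw [hpdf', integral_const_mul, mul_comm (f' _)] at hparts
  rwa [neg_mul, neg_inj, inv_mul_eq_iff_eq_mul₀ hv'] at hparts

lemma exp_mul_gaussianPDFReal_neg (m : ℝ) (x : ℝ) :
    Real.exp (m * x) * gaussianPDFReal m 1 (-x)
      = Real.exp (-(m * x)) * gaussianPDFReal m 1 x := by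
  simp only [gaussianPDFReal]
  rw [mul_left_comm, mul_left_comm (Real.exp (-(m * x))), ← Real.exp_add, ← Real.exp_add,
    NNReal.coe_one]
  ring_nf

-- The density of `N(m, 1)` times `1 - tanh (m x) = exp (-m x) / cosh (m x)` is an even function.
theorem integral_odd_mul_one_sub_tanh_gaussianReal {g : ℝ → ℝ} (hg : ∀ x, g (-x) = -g x)
    (m : ℝ) : ∫ x, g x * (1 - Real.tanh (m * x)) ∂gaussianReal m 1 = 0 := by
  rw [integral_gaussianReal_eq_integral_smul one_ne_zero]
  set G : ℝ → ℝ := fun x => gaussianPDFReal m 1 x • (g x * (1 - Real.tanh (m * x))) with hG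
  have hGx : ∀ x, G x
      = Real.exp (-(m * x)) * gaussianPDFReal m 1 x * g x / Real.cosh (m * x) := fun x => by
    have hc := (Real.cosh_pos (m * x)).ne'
    simp only [hG, smul_eq_mul]
    rw [← Real.cosh_sub_sinh, Real.tanh_eq_sinh_div_cosh]
    field_simp
  have hodd : ∀ x, G (-x) = -G x := fun x => by
    rw [hGx, hGx, mul_neg, neg_neg, exp_mul_gaussianPDFReal_neg, hg, Real.cosh_neg]
    ring
  have := integral_neg_eq_self G volume
  simp only [hodd, integral_neg] at this
  linarith

lemma integrable_id_gaussianReal (m : ℝ) (v : ℝ≥0) :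
    Integrable (fun x => x) (gaussianReal m v) :=
  memLp_one_iff_integrable.1 (memLp_id_gaussianReal 1)

lemma integrable_mul_tanh {μ : Measure ℝ} {f : ℝ → ℝ} (hf : Integrable f μ) (s : ℝ) :
    Integrable (fun x => f x * Real.tanh (s * x)) μ :=
  hf.mul_bdd (c := 1) (by fun_prop) (ae_of_all _ fun x => abs_tanh_le_one (s * x))

lemma integrable_tanh (μ : Measure ℝ) [IsFiniteMeasure μ] (s : ℝ) :
    Integrable (fun x => Real.tanh (s * x)) μ := by
  simpa only [one_mul] using integrable_mul_tanh (integrable_const (μ := μ) 1) s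

lemma integrable_tanh_sq (μ : Measure ℝ) [IsFiniteMeasure μ] (s : ℝ) :
    Integrable (fun x => Real.tanh (s * x) ^ 2) μ := by
  simpa only [sq] using integrable_mul_tanh (integrable_tanh μ s) s

lemma integral_tanh_gaussianReal (m : ℝ) :
    ∫ x, Real.tanh (m * x) ∂gaussianReal m 1
      = ∫ x, Real.tanh (m * x) ^ 2 ∂gaussianReal m 1 := by
  have h := integral_odd_mul_one_sub_tanh_gaussianReal (g := fun x => Real.tanh (m * x))
    (fun x => by rw [mul_neg, Real.tanh_neg]) m
  simp only [mul_sub, mul_one, ← sq] at h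
  rwa [integral_sub (integrable_tanh _ m) (integrable_tanh_sq _ m), sub_eq_zero] at h

lemma integral_mul_tanh_gaussianReal (m : ℝ) :
    ∫ x, x * Real.tanh (m * x) ∂gaussianReal m 1 = m := by
  have hid := integrable_id_gaussianReal m 1
  have h := integral_odd_mul_one_sub_tanh_gaussianReal (g := fun x => x) (fun _ => rfl) m
  simp only [mul_sub, mul_one] at h
  rw [integral_sub hid (integrable_mul_tanh hid m), integral_id_gaussianReal, sub_eq_zero] at h
  exact h.symm

lemma integral_tanh_sq_gaussianReal_le (m : ℝ) :
    ∫ x, Real.tanh (m * x) ^ 2 ∂gaussianReal m 1 ≤ m ^ 2 :=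
  calc ∫ x, Real.tanh (m * x) ^ 2 ∂gaussianReal m 1
      ≤ ∫ x, m * (x * Real.tanh (m * x)) ∂gaussianReal m 1 :=
        integral_mono (integrable_tanh_sq _ m)
          ((integrable_mul_tanh (integrable_id_gaussianReal m 1) m).const_mul m) fun x => by
            simpa only [mul_assoc] using tanh_sq_le_mul_tanh (m * x)
    _ = m ^ 2 := by rw [integral_const_mul, integral_mul_tanh_gaussianReal, sq]

end Gaussian

section SymmMixtureKL

/-- The relative entropy of the symmetric mixture `½ N(s, 1) + ½ N(-s, 1)` with respect to
`N(0, 1)`. The density of the former with respect to the latter is `exp (-s² / 2) * cosh (s * x)`,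
and its logarithm, being even, is integrated against `N(s, 1)` instead of the mixture. -/
def symmMixtureKL (s : ℝ) : ℝ :=
  ∫ x, Real.log (Real.cosh (s * x)) ∂gaussianReal s 1 - s ^ 2 / 2

lemma integrable_log_cosh {α : Type*} [MeasurableSpace α] {μ : Measure α} {f : α → ℝ}
    (hf : Integrable f μ) : Integrable (fun x => Real.log (Real.cosh (f x))) μ :=
  hf.abs.mono' (hf.aemeasurable.cosh.log).aestronglyMeasurable
    (ae_of_all _ fun x => abs_log_cosh_le (f x))

lemma hasDerivAt_integral_log_cosh (s : ℝ) :
    HasDerivAt (fun s => ∫ x, Real.log (Real.cosh (s * x)) ∂gaussianReal s 1)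
      (∫ x, (x + s) * Real.tanh (s * x) ∂gaussianReal s 1) s := by
  have hshift : ∀ s : ℝ, ∫ x, Real.log (Real.cosh (s * x)) ∂gaussianReal s 1
      = ∫ z, Real.log (Real.cosh (s * (s + z))) ∂gaussianReal 0 1 := fun s =>
    integral_gaussianReal_eq_integral_const_add s 1 (by fun_prop)
  simp_rw [hshift]
  rw [integral_gaussianReal_eq_integral_const_add s 1 (by fun_prop)]
  have hid := integrable_id_gaussianReal 0 1
  refine (hasDerivAt_integral_of_dominated_loc_of_deriv_le (Metric.ball_mem_nhds s one_pos)
    (F' := fun u z => (u + z + u) * Real.tanh (u * (u + z)))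
    (bound := fun z => 2 * (|s| + 1) + |z|)
    (.of_forall fun u => Measurable.aestronglyMeasurable (by fun_prop))
    (integrable_log_cosh (((integrable_const s).add hid).const_mul s)) (by fun_prop)
    (ae_of_all _ fun z u hu => ?_) ((integrable_const _).add hid.abs)
    (ae_of_all _ fun z u _ => ?_)).2
  · rw [norm_mul, Real.norm_eq_abs, Real.norm_eq_abs]
    have hu' : |u| ≤ |s| + 1 := by
      have := abs_sub_abs_le_abs_sub u s
      rw [Metric.mem_ball, Real.dist_eq] at hu
      linarith
    calc |u + z + u| * |Real.tanh (u * (u + z))| ≤ |u + z + u| * 1 := by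
          gcongr; exact abs_tanh_le_one _
      _ ≤ |u| + |z| + |u| := by rw [mul_one]; exact abs_add_three u z u
      _ ≤ 2 * (|s| + 1) + |z| := by linarith
  · have hinner : HasDerivAt (fun u => u * (u + z)) (u + z + u) u := by
      simpa using! (hasDerivAt_id u).mul ((hasDerivAt_id u).add_const z)
    simpa only [mul_comm] using! (hasDerivAt_log_cosh _).comp u hinner

theorem hasDerivAt_symmMixtureKL (s : ℝ) :
    HasDerivAt symmMixtureKL (s * ∫ x, Real.tanh (s * x) ^ 2 ∂gaussianReal s 1) s := by
  have hid := integrable_id_gaussianReal s 1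
  have ht := integrable_tanh (gaussianReal s 1) s
  have ht2 := integrable_tanh_sq (gaussianReal s 1) s
  have hxt : Integrable (fun x => (x - s) * Real.tanh (s * x)) (gaussianReal s 1) :=
    integrable_mul_tanh (hid.sub (integrable_const s)) s
  have hderiv_tanh : ∀ x, HasDerivAt (fun x => Real.tanh (s * x))
      (s * (1 - Real.tanh (s * x) ^ 2)) x := fun x => by
    simpa [mul_comm] using! (hasDerivAt_tanh (s * x)).comp x ((hasDerivAt_id x).const_mul s)
  have hstein : ∫ x, (x - s) * Real.tanh (s * x) ∂gaussianReal s 1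
      = s * (1 - ∫ x, Real.tanh (s * x) ^ 2 ∂gaussianReal s 1) := by
    rw [integral_sub_mul_gaussianReal hderiv_tanh ht hxt
      (((integrable_const 1).sub ht2).const_mul s), integral_const_mul,
      integral_sub (integrable_const 1) ht2]
    simp
  have hsplit : ∫ x, (x + s) * Real.tanh (s * x) ∂gaussianReal s 1
      = s + s * ∫ x, Real.tanh (s * x) ^ 2 ∂gaussianReal s 1 := by
    calc ∫ x, (x + s) * Real.tanh (s * x) ∂gaussianReal s 1
        = ∫ x, ((x - s) * Real.tanh (s * x) + 2 * s * Real.tanh (s * x)) ∂gaussianReal s 1 := by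
          congr with x; ring
      _ = _ := by
          rw [integral_add hxt (ht.const_mul _), hstein, integral_const_mul,
            integral_tanh_gaussianReal]
          ring
  convert! (hasDerivAt_integral_log_cosh s).sub ((hasDerivAt_pow 2 s).div_const 2) using 1
  rw [hsplit]
  simp

theorem symmMixtureKL_sub_le {s t : ℝ} (hs : 0 ≤ s) (hst : s ≤ t) :
    symmMixtureKL t - symmMixtureKL s ≤ (t ^ 4 - s ^ 4) / 4 := by
  have hderiv : ∀ u, HasDerivAt (fun u => symmMixtureKL u - u ^ 4 / 4)
      (u * ∫ x, Real.tanh (u * x) ^ 2 ∂gaussianReal u 1 - u * u ^ 2) u := fun u => by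
    convert! (hasDerivAt_symmMixtureKL u).sub ((hasDerivAt_pow 4 u).div_const 4) using 1
    push_cast
    ring
  have hanti : AntitoneOn (fun u => symmMixtureKL u - u ^ 4 / 4) (Set.Ici 0) := by
    refine antitoneOn_of_hasDerivWithinAt_nonpos (convex_Ici 0)
      (fun u _ => (hderiv u).continuousAt.continuousWithinAt)
      (fun u _ => (hderiv u).hasDerivWithinAt) fun u hu => ?_
    rw [interior_Ici] at hu
    exact sub_nonpos.2 (mul_le_mul_of_nonneg_left (integral_tanh_sq_gaussianReal_le u) hu.le)
  have := hanti hs (hs.trans hst) hst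
  simp only at this
  linarith

end SymmMixtureKL

section MutualInformation

variable {α : Type*} [MeasurableSpace α]

lemma rnDeriv_toReal_pos {μ ν : Measure α} [SigmaFinite μ] [SigmaFinite ν] (h : μ ≪ ν) :
    ∀ᵐ x ∂μ, 0 < (μ.rnDeriv ν x).toReal := by
  filter_upwards [Measure.rnDeriv_pos h, h.ae_le (μ.rnDeriv_lt_top ν)] with x hpos hlt
  exact ENNReal.toReal_pos hpos.ne' hlt.ne

lemma llr_add_llr {μ ν ρ : Measure α} [SigmaFinite μ] [SigmaFinite ν] [SigmaFinite ρ]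
    (hμν : μ ≪ ν) (hνρ : ν ≪ ρ) :
    (fun x => llr μ ν x + llr ν ρ x) =ᵐ[μ] llr μ ρ := by
  filter_upwards [(hμν.trans hνρ).ae_eq (Measure.rnDeriv_mul_rnDeriv (κ := ρ) hμν),
    rnDeriv_toReal_pos hμν, hμν.ae_le (rnDeriv_toReal_pos hνρ)] with x hmul hx hy
  simp only [llr_def]
  rw [← hmul, Pi.mul_apply, ENNReal.toReal_mul, Real.log_mul hx.ne' hy.ne']

lemma rnDeriv_le_of_le_smul {μ ν : Measure α} [SigmaFinite ν] {c : ℝ≥0∞} (h : μ ≤ c • ν) :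
    ∀ᵐ x ∂ν, μ.rnDeriv ν x ≤ c := by
  refine ae_le_of_forall_setLIntegral_le_of_sigmaFinite (μ.measurable_rnDeriv ν) fun s _ _ => ?_
  rw [setLIntegral_const]
  exact (Measure.setLIntegral_rnDeriv_le s).trans (h s)

lemma integrable_llr_of_le_smul {μ ν : Measure α} [IsFiniteMeasure μ] [IsFiniteMeasure ν]
    {c : ℝ≥0} (h : μ ≤ c • ν) : Integrable (llr μ ν) μ := by
  have hμν : μ ≪ ν := Measure.absolutelyContinuous_of_le_smul h
  obtain ⟨C, hC⟩ := (isCompact_Icc (a := (0 : ℝ)) (b := c)).exists_bound_of_continuousOn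
    Real.continuous_mul_log.continuousOn
  rw [← integrable_rnDeriv_mul_log_iff hμν]
  refine Integrable.of_bound (by fun_prop) C ?_
  filter_upwards [rnDeriv_le_of_le_smul h] with x hx
  exact hC _ ⟨ENNReal.toReal_nonneg, ENNReal.toReal_mono ENNReal.coe_ne_top hx⟩

variable {ι : Type*} [Fintype ι]

/-- The marginal law of a sample whose conditional law given a uniformly distributed latent
index `t : ι` is `κ t`. -/
def uniformMixture (κ : ι → Measure α) : Measure α :=
  (Fintype.card ι : ℝ≥0∞)⁻¹ • ∑ t, κ t

lemma uniformMixture_absolutelyContinuous {κ : ι → Measure α} {ν : Measure α}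
    (h : ∀ s, κ s ≪ ν) : uniformMixture κ ≪ ν := by
  rw [uniformMixture, ← Measure.sum_fintype]
  exact (Measure.absolutelyContinuous_sum_left h).smul_left _

lemma integral_uniformMixture {κ : ι → Measure α} {f : α → ℝ} (hf : ∀ s, Integrable f (κ s)) :
    ∫ x, f x ∂uniformMixture κ = (Fintype.card ι : ℝ)⁻¹ * ∑ s, ∫ x, f x ∂κ s := by
  rw [uniformMixture, integral_smul_measure, integral_finsetSum_measure fun s _ => hf s]
  simp

variable [Nonempty ι]

lemma integrable_uniformMixture {κ : ι → Measure α} {f : α → ℝ} (hf : ∀ s, Integrable f (κ s)) :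
    Integrable f (uniformMixture κ) :=
  (integrable_finsetSum_measure.2 fun s _ => hf s).smul_measure (by simp)

lemma le_card_smul_uniformMixture (κ : ι → Measure α) (s : ι) :
    κ s ≤ (Fintype.card ι : ℝ≥0) • uniformMixture κ := by
  have hsum : ((Fintype.card ι : ℝ≥0) : ℝ≥0∞) • uniformMixture κ = ∑ t, κ t := by
    rw [uniformMixture, smul_smul, ENNReal.coe_natCast,
      ENNReal.mul_inv_cancel (by simp) (by simp), one_smul]
  rw [← ENNReal.smul_def] at hsum
  exact (Finset.single_le_sum (fun t _ => Measure.zero_le (κ t)) (Finset.mem_univ s)).trans_eq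
    hsum.symm

variable {κ : ι → Measure α} [∀ t, IsProbabilityMeasure (κ t)]

instance isProbabilityMeasure_uniformMixture : IsProbabilityMeasure (uniformMixture κ) :=
  ⟨by simp [uniformMixture, ENNReal.inv_mul_cancel]⟩

variable {ν : Measure α} [IsProbabilityMeasure ν]

lemma llr_sub_llr_uniformMixture (hac : ∀ s, κ s ≪ ν) (s : ι) :
    (fun x => llr (κ s) ν x - llr (κ s) (uniformMixture κ) x) =ᵐ[κ s] llr (uniformMixture κ) ν := by
  filter_upwards [llr_add_llr (Measure.absolutelyContinuous_of_le_smul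
    (le_card_smul_uniformMixture κ s)) (uniformMixture_absolutelyContinuous hac)] with x hx
  rw [← hx, add_sub_cancel_left]

lemma integrable_llr_uniformMixture (hac : ∀ s, κ s ≪ ν)
    (hint : ∀ s, Integrable (llr (κ s) ν) (κ s)) (s : ι) :
    Integrable (llr (uniformMixture κ) ν) (κ s) :=
  ((hint s).sub (integrable_llr_of_le_smul (le_card_smul_uniformMixture κ s))).congr
    (llr_sub_llr_uniformMixture hac s)

theorem mutualInfoUnif_eq_sub (hac : ∀ s, κ s ≪ ν)
    (hint : ∀ s, Integrable (llr (κ s) ν) (κ s)) :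
    mutualInfoUnif κ =
      (Fintype.card ι : ℝ)⁻¹ * ∑ s, klDivR (κ s) ν - klDivR (uniformMixture κ) ν := by
  have hsplit (s : ι) : ∫ x, llr (uniformMixture κ) ν x ∂κ s
      = klDivR (κ s) ν - klDivR (κ s) (uniformMixture κ) := by
    rw [← integral_congr_ae (llr_sub_llr_uniformMixture hac s)]
    exact integral_sub (hint s) (integrable_llr_of_le_smul (le_card_smul_uniformMixture κ s))
  have hmix : klDivR (uniformMixture κ) ν
      = (Fintype.card ι : ℝ)⁻¹ * ∑ s, ∫ x, llr (uniformMixture κ) ν x ∂κ s :=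
    integral_uniformMixture (integrable_llr_uniformMixture hac hint)
  simp only [hmix, hsplit]
  rw [Finset.sum_sub_distrib, mul_sub, sub_sub_cancel]
  rfl

theorem mutualInfoUnif_le (hac : ∀ s, κ s ≪ ν) (hint : ∀ s, Integrable (llr (κ s) ν) (κ s)) :
    mutualInfoUnif κ ≤ (Fintype.card ι : ℝ)⁻¹ * ∑ s, klDivR (κ s) ν := by
  have hgibbs : 0 ≤ klDivR (uniformMixture κ) ν := by
    have h := InformationTheory.integral_llr_add_sub_measure_univ_nonneg
      (uniformMixture_absolutelyContinuous hac)
      (integrable_uniformMixture (integrable_llr_uniformMixture hac hint))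
    simpa only [probReal_univ, add_sub_cancel_right] using! h
  rw [mutualInfoUnif_eq_sub hac hint]
  exact sub_le_self _ hgibbs

end MutualInformation

section Tilting

variable {α : Type*} [MeasurableSpace α] {ρ : Measure α} {f g : α → ℝ}

lemma integrable_cosh (hf : Integrable (fun x => Real.exp (f x)) ρ)
    (hf' : Integrable (fun x => Real.exp (-f x)) ρ) :
    Integrable (fun x => Real.cosh (f x)) ρ := by
  simpa only [Real.cosh_eq, Pi.add_apply] using (hf.add hf').div_const 2

lemma integral_cosh_eq_integral_exp (hf : Integrable (fun x => Real.exp (f x)) ρ)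
    (hf' : Integrable (fun x => Real.exp (-f x)) ρ)
    (h : ∫ x, Real.exp (-f x) ∂ρ = ∫ x, Real.exp (f x) ∂ρ) :
    ∫ x, Real.cosh (f x) ∂ρ = ∫ x, Real.exp (f x) ∂ρ := by
  simp only [Real.cosh_eq]
  rw [integral_div, integral_add hf hf', h, add_self_div_two]

theorem tilted_log_cosh (hm : Measurable f) (hf : Integrable (fun x => Real.exp (f x)) ρ)
    (hf' : Integrable (fun x => Real.exp (-f x)) ρ)
    (h : ∫ x, Real.exp (-f x) ∂ρ = ∫ x, Real.exp (f x) ∂ρ) :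
    ρ.tilted (fun x => Real.log (Real.cosh (f x)))
      = (2 : ℝ≥0∞)⁻¹ • ρ.tilted f + (2 : ℝ≥0∞)⁻¹ • ρ.tilted (fun x => -f x) := by
  simp only [Measure.tilted, Real.exp_log (Real.cosh_pos _), integral_cosh_eq_integral_exp hf hf' h,
    h]
  rw [← withDensity_smul _ (by fun_prop), ← withDensity_smul _ (by fun_prop),
    ← withDensity_add_left (by fun_prop)]
  congr 1
  ext x
  have h2 : (2 : ℝ≥0∞)⁻¹ = ENNReal.ofReal 2⁻¹ := by
    rw [ENNReal.ofReal_inv_of_pos two_pos, ENNReal.ofReal_ofNat]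
  have : 0 ≤ ∫ y, Real.exp (f y) ∂ρ := integral_nonneg fun _ => (Real.exp_pos _).le
  simp only [Pi.add_apply, Pi.smul_apply, smul_eq_mul, h2]
  rw [← ENNReal.ofReal_mul (by positivity), ← ENNReal.ofReal_mul (by positivity),
    ← ENNReal.ofReal_add (by positivity) (by positivity), Real.cosh_eq]
  congr 1
  ring

theorem llr_tilted_tilted [SigmaFinite ρ] (hf : Integrable (fun x => Real.exp (f x)) ρ)
    (hg : Integrable (fun x => Real.exp (g x)) ρ) :
    llr (ρ.tilted f) (ρ.tilted g) =ᵐ[ρ.tilted f] fun x =>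
      (f x - Real.log (∫ y, Real.exp (f y) ∂ρ)) - (g x - Real.log (∫ y, Real.exp (g y) ∂ρ)) := by
  rcases eq_zero_or_neZero ρ with rfl | hρ
  · simp [Filter.EventuallyEq]
  have hgf : g + (f - g) = f := add_sub_cancel g f
  have hint : Integrable (fun x => Real.exp ((f - g) x)) (ρ.tilted g) := by
    rw [integrable_tilted_iff hg]
    simpa only [smul_eq_mul, ← Real.exp_add, ← Pi.add_apply, hgf] using hf
  have hac : ρ.tilted f ≪ ρ.tilted g :=
    (tilted_absolutelyContinuous ρ f).trans (absolutelyContinuous_tilted hg)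
  have hlog := hac.ae_eq (log_rnDeriv_tilted_left_self hint)
  rw [tilted_tilted hg, integral_exp_tilted, hgf,
    Real.log_div (integral_exp_pos hf).ne' (integral_exp_pos hg).ne'] at hlog
  filter_upwards [hlog] with x hx
  exact hx.trans (sub_sub_sub_comm _ _ _ _)

theorem pi_tilted {ι : Type*} [Fintype ι] {X : ι → Type*} [∀ i, MeasurableSpace (X i)]
    (μ : ∀ i, Measure (X i)) [∀ i, SigmaFinite (μ i)] (f : ∀ i, X i → ℝ) :
    (Measure.pi μ).tilted (fun x => ∑ i, f i (x i)) = Measure.pi fun i => (μ i).tilted (f i) := by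
  refine (Measure.pi_eq fun s hs => ?_).symm
  rw [tilted_apply_eq_ofReal_integral' _ (MeasurableSet.univ_pi hs), Measure.restrict_pi_pi]
  simp only [tilted_apply_eq_ofReal_integral' _ (hs _), Real.exp_sum]
  rw [integral_fintype_prod_eq_prod (μ := μ) fun i x => Real.exp (f i x)]
  simp only [← Finset.prod_div_distrib]
  rw [integral_fintype_prod_eq_prod (μ := fun i => (μ i).restrict (s i))
      fun i x => Real.exp (f i x) / ∫ y, Real.exp (f i y) ∂μ i,
    ENNReal.ofReal_prod_of_nonneg fun i _ => integral_nonneg fun x => by positivity]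

theorem gaussianReal_tilted_mul (m : ℝ) {v : ℝ≥0} (hv : v ≠ 0) (t : ℝ) :
    (gaussianReal m v).tilted (fun x => t * x) = gaussianReal (m + v * t) v := by
  have hmgf : ∫ x, Real.exp (t * x) ∂gaussianReal m v = Real.exp (m * t + v * t ^ 2 / 2) :=
    congrFun mgf_fun_id_gaussianReal t
  have hv' : (v : ℝ) ≠ 0 := by exact_mod_cast hv
  rw [Measure.tilted, hmgf, gaussianReal_of_var_ne_zero _ hv, gaussianReal_of_var_ne_zero _ hv,
    ← withDensity_mul _ (by fun_prop) (by fun_prop)]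
  congr 1
  ext x
  simp only [Pi.mul_apply, gaussianPDF, gaussianPDFReal]
  rw [← ENNReal.ofReal_mul (by positivity), mul_assoc, ← Real.exp_sub, ← Real.exp_add]
  congr 3
  field_simp
  ring

end Tilting

section GaussPi

variable {p : ℕ}

instance isProbabilityMeasure_gaussPi (m : Fin p → ℝ) : IsProbabilityMeasure (gaussPi m) :=
  inferInstanceAs (IsProbabilityMeasure (Measure.pi _))

instance isProbabilityMeasure_unlabeledLaw (m : Fin p → ℝ) :
    IsProbabilityMeasure (unlabeledLaw m) :=
  ⟨by simp [unlabeledLaw, ENNReal.inv_two_add_inv_two]⟩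

lemma gaussPi_tilted_dotProduct (m a : Fin p → ℝ) :
    (gaussPi m).tilted (fun x => a ⬝ᵥ x) = gaussPi (m + a) := by
  simp only [gaussPi, dotProduct]
  rw [pi_tilted (fun j => gaussianReal (m j) 1) fun j y => a j * y]
  simp [gaussianReal_tilted_mul _ one_ne_zero]

lemma dotProduct_self_nonneg (a : Fin p → ℝ) : 0 ≤ a ⬝ᵥ a := by
  simpa using! dotProduct_self_star_nonneg a

lemma coe_toNNReal_dotProduct_self (a : Fin p → ℝ) : ((a ⬝ᵥ a).toNNReal : ℝ) = a ⬝ᵥ a :=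
  Real.coe_toNNReal _ (dotProduct_self_nonneg a)

theorem gaussPi_map_dotProduct (m a : Fin p → ℝ) :
    (gaussPi m).map (fun x => a ⬝ᵥ x) = gaussianReal (a ⬝ᵥ m) (a ⬝ᵥ a).toNNReal := by
  have hscale : (gaussPi m).map (fun x j => a j * x j)
      = Measure.pi fun j => (gaussianReal (m j) 1).map (a j * ·) :=
    Measure.pi_map_pi (μ := fun j => gaussianReal (m j) 1) (f := fun j y => a j * y)
      fun j => by fun_prop
  have hcomp : (gaussPi m).map (fun x => a ⬝ᵥ x)
      = ((gaussPi m).map (fun x j => a j * x j)).map fun y => ∑ j, y j :=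
    (Measure.map_map (by fun_prop) (by fun_prop)).symm
  refine Measure.ext_of_charFun (funext fun t => ?_)
  simp only [gaussianReal_map_const_mul] at hscale
  rw [hcomp, hscale, charFun_map_sum_pi_eq_prod, Finset.prod_apply]
  simp only [charFun_gaussianReal, ← Complex.exp_sum]
  congr 1
  rw [coe_toNNReal_dotProduct_self]
  simp [dotProduct, Finset.mul_sum, Finset.sum_mul, Finset.sum_div, pow_two]

lemma integrable_dotProduct_gaussPi (m a : Fin p → ℝ) :
    Integrable (fun x => a ⬝ᵥ x) (gaussPi m) := by
  have h := integrable_id_gaussianReal (a ⬝ᵥ m) (a ⬝ᵥ a).toNNReal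
  rw [← gaussPi_map_dotProduct] at h
  exact h.comp_measurable (by fun_prop)

lemma integrable_exp_dotProduct_gaussPi (m a : Fin p → ℝ) :
    Integrable (fun x => Real.exp (a ⬝ᵥ x)) (gaussPi m) := by
  have h := integrable_exp_mul_gaussianReal (μ := a ⬝ᵥ m) (v := (a ⬝ᵥ a).toNNReal) 1
  rw [← gaussPi_map_dotProduct] at h
  simpa only [one_mul] using! h.comp_measurable (by fun_prop)

lemma integral_exp_dotProduct_gaussPi_zero (a : Fin p → ℝ) :
    ∫ x, Real.exp (a ⬝ᵥ x) ∂gaussPi 0 = Real.exp (a ⬝ᵥ a / 2) := by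
  have h := mgf_gaussianReal (gaussPi_map_dotProduct 0 a) 1
  simpa only [mgf, one_mul, dotProduct_zero, zero_mul, zero_add, coe_toNNReal_dotProduct_self,
    one_pow, mul_one] using h

lemma unlabeledLaw_eq_tilted (m : Fin p → ℝ) :
    unlabeledLaw m = (gaussPi 0).tilted fun x => Real.log (Real.cosh (m ⬝ᵥ x)) := by
  have hneg : ∀ x, -(m ⬝ᵥ x) = -m ⬝ᵥ x := fun x => (neg_dotProduct m x).symm
  rw [tilted_log_cosh (by fun_prop) (integrable_exp_dotProduct_gaussPi 0 m)]
  · simp only [hneg, gaussPi_tilted_dotProduct, zero_add]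
    rfl
  · simpa only [hneg] using integrable_exp_dotProduct_gaussPi 0 (-m)
  · simp only [hneg, integral_exp_dotProduct_gaussPi_zero, neg_dotProduct_neg]

lemma integrable_cosh_dotProduct_gaussPi (m a : Fin p → ℝ) :
    Integrable (fun x => Real.cosh (a ⬝ᵥ x)) (gaussPi m) :=
  integrable_cosh (integrable_exp_dotProduct_gaussPi m a)
    (by simpa only [neg_dotProduct] using integrable_exp_dotProduct_gaussPi m (-a))

lemma integral_cosh_dotProduct_gaussPi_zero (a : Fin p → ℝ) :
    ∫ x, Real.cosh (a ⬝ᵥ x) ∂gaussPi 0 = Real.exp (a ⬝ᵥ a / 2) := by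
  have hneg : ∀ x, -(a ⬝ᵥ x) = -a ⬝ᵥ x := fun x => (neg_dotProduct a x).symm
  rw [integral_cosh_eq_integral_exp (integrable_exp_dotProduct_gaussPi 0 a),
    integral_exp_dotProduct_gaussPi_zero]
  · simpa only [hneg] using integrable_exp_dotProduct_gaussPi 0 (-a)
  · simp only [hneg, integral_exp_dotProduct_gaussPi_zero, neg_dotProduct_neg]

lemma integrable_unlabeledLaw {f : (Fin p → ℝ) → ℝ} {m : Fin p → ℝ}
    (hf : ∀ a, Integrable f (gaussPi a)) : Integrable f (unlabeledLaw m) :=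
  ((hf m).smul_measure (by simp)).add_measure ((hf _).smul_measure (by simp))

lemma llr_unlabeledLaw (m a : Fin p → ℝ) :
    llr (unlabeledLaw m) (unlabeledLaw a) =ᵐ[unlabeledLaw m] fun x =>
      (Real.log (Real.cosh (m ⬝ᵥ x)) - m ⬝ᵥ m / 2)
        - (Real.log (Real.cosh (a ⬝ᵥ x)) - a ⬝ᵥ a / 2) := by
  have hint (a : Fin p → ℝ) :
      Integrable (fun x => Real.exp (Real.log (Real.cosh (a ⬝ᵥ x)))) (gaussPi 0) := by
    simpa only [Real.exp_log (Real.cosh_pos _)] using integrable_cosh_dotProduct_gaussPi 0 a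
  simpa only [← unlabeledLaw_eq_tilted, Real.exp_log (Real.cosh_pos _),
    integral_cosh_dotProduct_gaussPi_zero, Real.log_exp] using llr_tilted_tilted (hint m) (hint a)

lemma unlabeledLaw_absolutelyContinuous (m a : Fin p → ℝ) :
    unlabeledLaw m ≪ unlabeledLaw a := by
  simp only [unlabeledLaw_eq_tilted]
  refine (tilted_absolutelyContinuous _ _).trans (absolutelyContinuous_tilted ?_)
  simpa only [Real.exp_log (Real.cosh_pos _)] using integrable_cosh_dotProduct_gaussPi 0 a

lemma integrable_log_cosh_dotProduct_sub_const_unlabeledLaw (m a : Fin p → ℝ) (c : ℝ) :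
    Integrable (fun x => Real.log (Real.cosh (a ⬝ᵥ x)) - c) (unlabeledLaw m) :=
  (integrable_log_cosh (integrable_unlabeledLaw fun b => integrable_dotProduct_gaussPi b a)).sub
    (integrable_const c)

lemma integrable_llr_unlabeledLaw (m a : Fin p → ℝ) :
    Integrable (llr (unlabeledLaw m) (unlabeledLaw a)) (unlabeledLaw m) :=
  ((integrable_log_cosh_dotProduct_sub_const_unlabeledLaw m m _).sub
    (integrable_log_cosh_dotProduct_sub_const_unlabeledLaw m a _)).congr (llr_unlabeledLaw m a).symm

lemma unlabeledLaw_map_dotProduct (m a : Fin p → ℝ) :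
    (unlabeledLaw m).map (fun x => a ⬝ᵥ x)
      = (2 : ℝ≥0∞)⁻¹ • gaussianReal (a ⬝ᵥ m) (a ⬝ᵥ a).toNNReal
        + (2 : ℝ≥0∞)⁻¹ • gaussianReal (-(a ⬝ᵥ m)) (a ⬝ᵥ a).toNNReal := by
  have hmeas : Measurable fun x : Fin p → ℝ => a ⬝ᵥ x := by fun_prop
  rw [unlabeledLaw, Measure.map_add _ _ hmeas, Measure.map_smul, Measure.map_smul,
    gaussPi_map_dotProduct, gaussPi_map_dotProduct, ← dotProduct_neg]
  rfl

lemma integral_log_cosh_dotProduct_unlabeledLaw (m a : Fin p → ℝ) :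
    ∫ x, Real.log (Real.cosh (a ⬝ᵥ x)) ∂unlabeledLaw m
      = ∫ y, Real.log (Real.cosh y) ∂gaussianReal (a ⬝ᵥ m) (a ⬝ᵥ a).toNNReal := by
  have hint (b : ℝ) : Integrable (fun y => Real.log (Real.cosh y))
      ((2 : ℝ≥0∞)⁻¹ • gaussianReal b (a ⬝ᵥ a).toNNReal) :=
    (integrable_log_cosh (integrable_id_gaussianReal b _)).smul_measure (by simp)
  have hmeas : Measurable fun y => Real.log (Real.cosh y) := by fun_prop
  rw [← integral_map (φ := fun x => a ⬝ᵥ x) (f := fun y => Real.log (Real.cosh y)) (by fun_prop)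
    hmeas.aestronglyMeasurable, unlabeledLaw_map_dotProduct, integral_add_measure (hint _) (hint _),
    ← gaussianReal_map_neg, integral_smul_measure, integral_smul_measure,
    integral_map (by fun_prop) hmeas.aestronglyMeasurable]
  simp [← two_mul]

lemma integral_log_cosh_dotProduct_sub_unlabeledLaw {m a : Fin p → ℝ} (h : a ⬝ᵥ m = a ⬝ᵥ a) :
    ∫ x, (Real.log (Real.cosh (a ⬝ᵥ x)) - a ⬝ᵥ a / 2) ∂unlabeledLaw m
      = symmMixtureKL √(a ⬝ᵥ a) := by
  set s := √(a ⬝ᵥ a)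
  have hsq : s ^ 2 = a ⬝ᵥ a := Real.sq_sqrt (dotProduct_self_nonneg a)
  have hlaw : gaussianReal (a ⬝ᵥ m) (a ⬝ᵥ a).toNNReal = (gaussianReal s 1).map (s * ·) := by
    rw [gaussianReal_map_const_mul, h, ← pow_two]
    congr 1
    · exact hsq.symm
    · ext
      simp [hsq, dotProduct_self_nonneg a]
  have hmeas : Measurable fun y => Real.log (Real.cosh y) := by fun_prop
  rw [integral_sub (by simpa using integrable_log_cosh_dotProduct_sub_const_unlabeledLaw m a 0)
    (integrable_const _), integral_log_cosh_dotProduct_unlabeledLaw, hlaw,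
    integral_map (by fun_prop) hmeas.aestronglyMeasurable, integral_const, symmMixtureKL, hsq]
  simp

theorem klDivR_unlabeledLaw {m a : Fin p → ℝ} (h : a ⬝ᵥ m = a ⬝ᵥ a) :
    klDivR (unlabeledLaw m) (unlabeledLaw a)
      = symmMixtureKL √(m ⬝ᵥ m) - symmMixtureKL √(a ⬝ᵥ a) := by
  have hllr : klDivR (unlabeledLaw m) (unlabeledLaw a)
      = ∫ x, ((Real.log (Real.cosh (m ⬝ᵥ x)) - m ⬝ᵥ m / 2)
          - (Real.log (Real.cosh (a ⬝ᵥ x)) - a ⬝ᵥ a / 2)) ∂unlabeledLaw m :=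
    integral_congr_ae (llr_unlabeledLaw m a)
  rw [hllr, integral_sub (integrable_log_cosh_dotProduct_sub_const_unlabeledLaw m m _)
    (integrable_log_cosh_dotProduct_sub_const_unlabeledLaw m a _),
    integral_log_cosh_dotProduct_sub_unlabeledLaw h,
    integral_log_cosh_dotProduct_sub_unlabeledLaw rfl]

lemma dotProduct_self_le_of_dotProduct_eq {m a : Fin p → ℝ} (h : a ⬝ᵥ m = a ⬝ᵥ a) :
    a ⬝ᵥ a ≤ m ⬝ᵥ m := by
  have hpos := dotProduct_self_nonneg (m - a)
  simp only [sub_dotProduct, dotProduct_sub, dotProduct_comm m a, h] at hpos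
  linarith

theorem klDivR_unlabeledLaw_le {m a : Fin p → ℝ} (h : a ⬝ᵥ m = a ⬝ᵥ a) :
    klDivR (unlabeledLaw m) (unlabeledLaw a) ≤ ((m ⬝ᵥ m) ^ 2 - (a ⬝ᵥ a) ^ 2) / 4 := by
  have hpow (b : Fin p → ℝ) : √(b ⬝ᵥ b) ^ 4 = (b ⬝ᵥ b) ^ 2 := by
    rw [show 4 = 2 * 2 from rfl, pow_mul, Real.sq_sqrt (dotProduct_self_nonneg b)]
  rw [klDivR_unlabeledLaw h, ← hpow m, ← hpow a]
  exact symmMixtureKL_sub_le (Real.sqrt_nonneg _)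
    (Real.sqrt_le_sqrt (dotProduct_self_le_of_dotProduct_eq h))

end GaussPi

section Supports

variable {p k : ℕ}

lemma muVec_dotProduct_muVec {lam : ℝ} (hlam : 0 ≤ lam) (S T : Finset (Fin p)) :
    muVec p k lam S ⬝ᵥ muVec p k lam T = (S ∩ T).card * (lam / k) := by
  have hsq : √(lam / k) * √(lam / k) = lam / k := Real.mul_self_sqrt (by positivity)
  have hterm (j : Fin p) :
      muVec p k lam S j * muVec p k lam T j = if j ∈ S ∩ T then lam / k else 0 := by
    by_cases hS : j ∈ S <;> by_cases hT : j ∈ T <;>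
      simp only [muVec, hS, hT, hsq, if_true, if_false, mul_zero, zero_mul, Finset.mem_inter,
        and_self, and_true, true_and]
  simp only [dotProduct, hterm, Finset.sum_ite_mem, Finset.univ_inter, Finset.sum_const,
    nsmul_eq_mul]

lemma klDivR_unlabeledLaw_muVec_le {lam : ℝ} (hlam : 0 ≤ lam) {S T : Finset (Fin p)}
    (h : S ⊆ T) :
    klDivR (unlabeledLaw (muVec p k lam T)) (unlabeledLaw (muVec p k lam S))
      ≤ ((T.card : ℝ) ^ 2 - (S.card : ℝ) ^ 2) * (lam / k) ^ 2 / 4 := by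
  have hST : S ∩ T = S := Finset.inter_eq_left.2 h
  have := klDivR_unlabeledLaw_le (m := muVec p k lam T) (a := muVec p k lam S) (by
    rw [muVec_dotProduct_muVec hlam, muVec_dotProduct_muVec hlam, hST, Finset.inter_self])
  simp only [muVec_dotProduct_muVec hlam, Finset.inter_self] at this
  linarith

/-- The common part `{0, …, k-2}` of all the supports in `stildeF p k`. -/
def sharedSupport (p k : ℕ) : Finset (Fin p) := {i | (i : ℕ) < k - 1}

lemma sharedSupport_subset {T : Finset (Fin p)} (hT : T ∈ stildeF p k) :
    sharedSupport p k ⊆ T := fun i hi =>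
  (Finset.mem_filter.1 hT).2 i (Finset.mem_filter.1 hi).2

lemma card_of_mem_stildeF {T : Finset (Fin p)} (hT : T ∈ stildeF p k) : T.card = k :=
  (Finset.mem_powersetCard.1 (Finset.mem_filter.1 hT).1).2

lemma card_sharedSupport (h : k ≤ p) : (sharedSupport p k).card = k - 1 := by
  rw [sharedSupport, Fin.card_filter_val_lt, min_eq_right (by omega)]

theorem klDivR_unlabeledLaw_sharedSupport_le {lam : ℝ} (hlam : 0 ≤ lam) (hk : k ≠ 0)
    {T : Finset (Fin p)} (hT : T ∈ stildeF p k) :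
    klDivR (unlabeledLaw (muVec p k lam T)) (unlabeledLaw (muVec p k lam (sharedSupport p k)))
      ≤ 1 / 2 * (lam ^ 2 / k) := by
  have hkp : k ≤ p := by
    simpa [card_of_mem_stildeF hT] using Finset.card_le_univ T
  refine (klDivR_unlabeledLaw_muVec_le hlam (sharedSupport_subset hT)).trans ?_
  rw [card_of_mem_stildeF hT, card_sharedSupport hkp, Nat.cast_pred (Nat.pos_of_ne_zero hk)]
  calc ((k : ℝ) ^ 2 - (k - 1) ^ 2) * (lam / k) ^ 2 / 4
      ≤ (2 * k) * (lam / k) ^ 2 / 4 := by gcongr; linarith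
    _ = 1 / 2 * (lam ^ 2 / k) := by
        field_simp
        ring

end Supports

theorem stmt9_general {lam : ℝ} (hlam : 0 ≤ lam) {p k : ℕ} (hk : k ≠ 0) :
    mutualInfoUnif (fun T : {T : Finset (Fin p) // T ∈ stildeF p k} =>
      unlabeledLaw (muVec p k lam T.1)) ≤ 1 / 2 * (lam ^ 2 / k) := by
  rcases isEmpty_or_nonempty {T : Finset (Fin p) // T ∈ stildeF p k} with hempty | hnonempty
  · simp only [mutualInfoUnif, Finset.univ_eq_empty, Finset.sum_empty, mul_zero]
    positivity
  · calc mutualInfoUnif (fun T : {T : Finset (Fin p) // T ∈ stildeF p k} =>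
          unlabeledLaw (muVec p k lam T.1))
        ≤ (Fintype.card {T : Finset (Fin p) // T ∈ stildeF p k} : ℝ)⁻¹ *
            ∑ T : {T : Finset (Fin p) // T ∈ stildeF p k},
              klDivR (unlabeledLaw (muVec p k lam T.1))
                (unlabeledLaw (muVec p k lam (sharedSupport p k))) :=
          mutualInfoUnif_le (fun _ => unlabeledLaw_absolutelyContinuous _ _)
            fun _ => integrable_llr_unlabeledLaw _ _
      _ ≤ 1 / 2 * (lam ^ 2 / k) := by
          rw [← div_eq_inv_mul, div_le_iff₀ (by positivity), mul_comm, ← nsmul_eq_mul]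
          exact Finset.sum_le_card_nsmul _ _ _ fun T _ =>
            klDivR_unlabeledLaw_sharedSupport_le hlam hk T.2

/-- Lemma 10: for `λ < 1`, in the asymptotic regime `p, k → ∞` with
`k/p → 0`, the mutual information between one unlabeled sample `x` and the support `S`
(uniform over `𝕊̃`) satisfies `I(x; S) ≤ (1/2)(λ²/k)(1 + o(1))`. -/
theorem stmt9 (lam : ℝ) (hlam : lam ∈ Set.Ioo (0 : ℝ) 1)
    (p k : ℕ → ℕ)
    (hp : Tendsto p atTop atTop) (hk : Tendsto k atTop atTop)
    (hkp : Tendsto (fun t => (k t : ℝ) / (p t : ℝ)) atTop (nhds 0)) :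
    ∀ ε > (0 : ℝ), ∀ᶠ t : ℕ in atTop,
      mutualInfoUnif (fun T : {T : Finset (Fin (p t)) // T ∈ stildeF (p t) (k t)} =>
          unlabeledLaw (muVec (p t) (k t) lam T.1))
        ≤ (1 / 2) * (lam ^ 2 / (k t : ℝ)) * (1 + ε) := by
  intro ε hε
  filter_upwards [hk.eventually_ne_atTop 0] with t ht
  exact (stmt9_general hlam.1.le ht).trans
    (le_mul_of_one_le_right (by positivity) (by linarith))
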